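/- arXiv:2504.05678 — 2 statements merged into one kernel-verified Lean document; each statement's English description precedes it below -/
import Mathlib

section
/- Let n ≥ 3, let < be a linear order on the set of objects O, and let D_< be the domain of all single-peaked preferences with respect to <. Then every efficient, individually rational and strategy-proof rule f : D_<^n → M satisfies equity under unanimous acclaim. -/
/-!
Let `i` be acclaimed at `P`, let `A` be the set of active agents and `k` the best object in `A`
for `i`; null agents keep their endowments by individual rationality. By reversing the order if
necessary, assume `i < k`. Replace the preference of `i` by the single-peaked preference
`k, k-1, …, 0, k+1, …, n-1` (in positions), with peak `k`. At the new profile individual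
rationality puts the object `x` assigned to `i` in the segment `[i, k]`. If `x ≠ k`, the agent `y`
who receives `k` is active and differs from `i`; as her favourite object in `A` is `i` and
`i ≤ x < k`, single-peakedness makes her strictly prefer `x` to `k`
(`singlePeaked_between`), while `i` strictly prefers her peak `k` to `x`. Swapping the assignments of
`i` and `y` is then a Pareto improvement, against efficiency (`not_efficient_of_swap`). So `i` gets
`k` at the new profile, and by strategy-proofness she receives something at least as good as `k` at
`P`; since her object at `P` lies in `A`, it is `k`.
-/

/-- A preference is a strict linear order on the objects `Fin n`, encoded by its
rank function: `p o < p o'` means object `o` is strictly preferred to `o'`. -/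
abbrev Pref (n : ℕ) := Fin n ≃ Fin n

/-- `o` is strictly preferred to `o'` under `p`. -/
def prefers {n : ℕ} (p : Pref n) (o o' : Fin n) : Prop := p o < p o'

/-- `o` is weakly preferred to `o'` under `p` (i.e. `o P o'` or `o = o'`). -/
def weakPref {n : ℕ} (p : Pref n) (o o' : Fin n) : Prop := p o ≤ p o'

/-- The top-ranked object `r_1(p)`. -/
def topObj {n : ℕ} [NeZero n] (p : Pref n) : Fin n := p.symm 0

/-- The second-ranked object `r_2(p)`. -/
def secondObj {n : ℕ} [NeZero n] (p : Pref n) : Fin n := p.symm 1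

/-- The `p`-best object of a (nonempty) finite set `S`: `max^p S`. -/
noncomputable def best {n : ℕ} [NeZero n] (p : Pref n) (S : Finset (Fin n)) : Fin n :=
  (S.toList.argmin (fun o => p o)).getD 0

/-- A profile belongs to the domain `D` coordinatewise. -/
def inD {n : ℕ} (D : Set (Pref n)) (P : Fin n → Pref n) : Prop := ∀ i, P i ∈ D

/-- Individual rationality of an allocation at a profile: each agent `i` weakly
prefers her assigned object to her endowment `o_i = i`. -/
def IRAt {n : ℕ} (P : Fin n → Pref n) (m : Fin n → Fin n) : Prop :=
  ∀ i, weakPref (P i) (m i) i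

/-- `m'` Pareto dominates `m` at profile `P`. -/
def ParetoDom {n : ℕ} (P : Fin n → Pref n) (m' m : Fin n → Fin n) : Prop :=
  (∀ i, weakPref (P i) (m' i) (m i)) ∧ ∃ j, prefers (P j) (m' j) (m j)

/-- Pareto efficiency of an allocation at a profile. -/
def EffAt {n : ℕ} (P : Fin n → Pref n) (m : Fin n → Fin n) : Prop :=
  ¬ ∃ m' : Fin n → Fin n, Function.Bijective m' ∧ ParetoDom P m' m

/-- A rule maps profiles from the domain to allocations (bijections `N → O`). -/
def IsRule {n : ℕ} (D : Set (Pref n)) (f : (Fin n → Pref n) → (Fin n → Fin n)) : Prop :=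
  ∀ P, inD D P → Function.Bijective (f P)

def Efficient {n : ℕ} (D : Set (Pref n)) (f : (Fin n → Pref n) → (Fin n → Fin n)) : Prop :=
  ∀ P, inD D P → EffAt P (f P)

def IndRational {n : ℕ} (D : Set (Pref n)) (f : (Fin n → Pref n) → (Fin n → Fin n)) : Prop :=
  ∀ P, inD D P → IRAt P (f P)

def StrategyProof {n : ℕ} (D : Set (Pref n)) (f : (Fin n → Pref n) → (Fin n → Fin n)) : Prop :=
  ∀ P, inD D P → ∀ i, ∀ p' ∈ D, weakPref (P i) (f P i) (f (Function.update P i p') i)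

/-- The active agents at profile `P` (those whose top object differs from their
endowment); since `o_i = i`, the set of active objects coincides with it. -/
def activeAgents {n : ℕ} [NeZero n] (P : Fin n → Pref n) : Finset (Fin n) :=
  Finset.univ.filter (fun i => topObj (P i) ≠ i)

/-- Agent `i` is the acclaimed agent at profile `P`. -/
def acclaimed {n : ℕ} [NeZero n] (P : Fin n → Pref n) (i : Fin n) : Prop :=
  2 < (activeAgents P).card ∧ i ∈ activeAgents P ∧
    best (P i) (activeAgents P) ≠ i ∧
    ∀ j ∈ activeAgents P, j ≠ i → best (P j) (activeAgents P) = i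

/-- Equity under unanimous acclaim. -/
def EquityUA {n : ℕ} [NeZero n] (D : Set (Pref n))
    (f : (Fin n → Pref n) → (Fin n → Fin n)) : Prop :=
  ∀ P, inD D P → ∀ i, acclaimed P i → f P i = best (P i) (activeAgents P)

/-- Agents `i` and `j` form the acclaimed pair at profile `P`. -/
def acclaimedPair {n : ℕ} [NeZero n] (P : Fin n → Pref n) (i j : Fin n) : Prop :=
  ∃ Ni Nj : Finset (Fin n),
    Disjoint Ni Nj ∧ Ni ∪ Nj = activeAgents P ∧ Ni.card = Nj.card ∧ 1 < Ni.card ∧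
    i ∈ Nj ∧ j ∈ Ni ∧
    (∀ l ∈ Ni, best (P l) (activeAgents P) = i) ∧
    (∀ l ∈ Nj, best (P l) (activeAgents P) = j)

/-- Equity under bipartite acclaim. -/
def EquityBA {n : ℕ} [NeZero n] (D : Set (Pref n))
    (f : (Fin n → Pref n) → (Fin n → Fin n)) : Prop :=
  ∀ P, inD D P → ∀ i j, acclaimedPair P i j → f P i = j ∨ f P j = i

/-- Equity⁺ under bipartite acclaim. -/
def EquityPlusBA {n : ℕ} [NeZero n] (D : Set (Pref n))
    (f : (Fin n → Pref n) → (Fin n → Fin n)) : Prop :=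
  ∀ P, inD D P → ∀ i j, acclaimedPair P i j → f P i = j ∧ f P j = i

/-- Single-peakedness of `p` w.r.t. the linear order on objects encoded by the
position permutation `σ` (`o < o'` iff `σ o < σ o'`). -/
def singlePeaked {n : ℕ} [NeZero n] (σ : Fin n ≃ Fin n) (p : Pref n) : Prop :=
  ∀ o o' : Fin n,
    ((σ o' < σ o ∧ σ o < σ (topObj p)) ∨ (σ (topObj p) < σ o ∧ σ o < σ o')) →
    prefers p o o'

/-- The full single-peaked domain `D_<`. -/
def spDomain {n : ℕ} [NeZero n] (σ : Fin n ≃ Fin n) : Set (Pref n) :=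
  {p | singlePeaked σ p}

/-- `D` is a single-peaked domain. -/
def IsSPDomain {n : ℕ} [NeZero n] (D : Set (Pref n)) : Prop :=
  ∃ σ : Fin n ≃ Fin n, D ⊆ spDomain σ

/-- Objects `o` and `o'` are connected in `D`: `o ∼ o'`. -/
def connectedObj {n : ℕ} [NeZero n] (D : Set (Pref n)) (o o' : Fin n) : Prop :=
  ∃ p ∈ D, ∃ p' ∈ D, topObj p = o ∧ secondObj p = o' ∧ topObj p' = o' ∧ secondObj p' = o

/-- `D` is path-connected. -/
def pathConnected {n : ℕ} [NeZero n] (D : Set (Pref n)) : Prop :=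
  ∀ o o' : Fin n, o ≠ o' → ∃ l : List (Fin n),
    l.Nodup ∧ l.head? = some o ∧ l.getLast? = some o' ∧ l.Chain' (connectedObj D)

/-- `p` and `p'` rank all objects in exactly opposite orders. -/
def reversedPair {n : ℕ} (p p' : Pref n) : Prop :=
  ∀ o o', prefers p o o' ↔ prefers p' o' o

/-- A rich domain: path-connected and containing two completely reversed preferences. -/
def richDomain {n : ℕ} [NeZero n] (D : Set (Pref n)) : Prop :=
  pathConnected D ∧ ∃ p ∈ D, ∃ p' ∈ D, reversedPair p p'

/-- The restriction `→(x,y,z) ∈ R(D)`: whenever `x` is the best of `{x,y,z}`,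
`y` is ranked above `z`. -/
def RestrR {n : ℕ} [NeZero n] (D : Set (Pref n)) (x y z : Fin n) : Prop :=
  ∀ p ∈ D, best p {x, y, z} = x → prefers p y z

/-- The ternary relation `(x,y,z) ∈ B(D)`. -/
def RelB {n : ℕ} [NeZero n] (D : Set (Pref n)) (x y z : Fin n) : Prop :=
  RestrR D x y z ∧ RestrR D z y x

/-! ### Extensive game forms and obvious strategy-proofness -/

/-- An extensive game form: a finite rooted tree of histories (lists of actions,
prefix-closed), a player function and an outcome function on terminal histories. -/
structure GameForm (n : ℕ) where
  hist : Finset (List ℕ)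
  root_mem : [] ∈ hist
  prefix_closed : ∀ h a, h ++ [a] ∈ hist → h ∈ hist
  player : List ℕ → Fin n
  outcome : List ℕ → (Fin n → Fin n)

/-- A strategy chooses an action at every history. -/
abbrev Strategy : Type := List ℕ → ℕ

/-- Terminal histories of the game form. -/
def GameForm.Terminal {n : ℕ} (Γ : GameForm n) (h : List ℕ) : Prop :=
  h ∈ Γ.hist ∧ ∀ a, h ++ [a] ∉ Γ.hist

/-- A strategy of agent `i` is valid if it always chooses a feasible action. -/
def GameForm.ValidStrat {n : ℕ} (Γ : GameForm n) (i : Fin n) (s : Strategy) : Prop :=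
  ∀ h ∈ Γ.hist, ¬ Γ.Terminal h → Γ.player h = i → h ++ [s h] ∈ Γ.hist

/-- Play from `h` under the strategy profile `s` reaches history `h'`. -/
inductive GameForm.Reaches {n : ℕ} (Γ : GameForm n) (s : Fin n → Strategy) :
    List ℕ → List ℕ → Prop
  | refl (h : List ℕ) : GameForm.Reaches Γ s h h
  | step {h h' : List ℕ} : GameForm.Reaches Γ s h h' → h' ∈ Γ.hist → ¬ Γ.Terminal h' →
      GameForm.Reaches Γ s h (h' ++ [s (Γ.player h') h'])

/-- `o` belongs to the feasible set `X_i(h, s_i)` of agent `i` at history `h`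
given her strategy `si`. -/
def GameForm.Feas {n : ℕ} (Γ : GameForm n) (i : Fin n) (h : List ℕ) (si : Strategy)
    (o : Fin n) : Prop :=
  ∃ s : Fin n → Strategy, (∀ j, Γ.ValidStrat j (s j)) ∧ s i = si ∧
    ∃ t, Γ.Reaches s h t ∧ Γ.Terminal t ∧ Γ.outcome t i = o

/-- `h` is a decision node of `i` reachable (on-path) when `i` plays `si`. -/
def GameForm.ReachableNode {n : ℕ} (Γ : GameForm n) (i : Fin n) (si : Strategy)
    (h : List ℕ) : Prop :=
  h ∈ Γ.hist ∧ ¬ Γ.Terminal h ∧ Γ.player h = i ∧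
    ∃ s : Fin n → Strategy, (∀ j, Γ.ValidStrat j (s j)) ∧ s i = si ∧ Γ.Reaches s [] h

/-- `si` obviously dominates `si'` at preference `p`: at every earliest point of
departure, the worst feasible outcome under `si` is weakly preferred to the best
feasible outcome under `si'`. -/
def GameForm.ObvDom {n : ℕ} (Γ : GameForm n) (i : Fin n) (p : Pref n)
    (si si' : Strategy) : Prop :=
  ∀ h, Γ.ReachableNode i si h → Γ.ReachableNode i si' h → si h ≠ si' h →
    ∀ o o', Γ.Feas i h si o → Γ.Feas i h si' o' → weakPref p o o'

/-- Obvious strategy-proofness of a rule `f` on domain `D`. -/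
def OSP {n : ℕ} (D : Set (Pref n)) (f : (Fin n → Pref n) → (Fin n → Fin n)) : Prop :=
  ∃ (Γ : GameForm n) (S : Fin n → Pref n → Strategy),
    (∀ i p, p ∈ D → Γ.ValidStrat i (S i p)) ∧
    (∀ i p, p ∈ D → ∀ s', Γ.ValidStrat i s' → Γ.ObvDom i p (S i p) s') ∧
    (∀ P : Fin n → Pref n, inD D P →
      ∃ t, Γ.Reaches (fun j => S j (P j)) [] t ∧ Γ.Terminal t ∧ Γ.outcome t = f P)

/-! ### The crawler, the designator, and top trading cycles -/

/-- The running state of the crawler/designator algorithms: the sub-allocation of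
objects currently held by remaining agents, and the final assignments so far. -/
structure AlgState (n : ℕ) where
  held : Fin n → Option (Fin n)
  res : Fin n → Option (Fin n)

/-- The object currently held by agent `i`. -/
def heldObj {n : ℕ} [NeZero n] (st : AlgState n) (i : Fin n) : Fin n := (st.held i).getD 0

/-- The remaining agents. -/
def remAgents {n : ℕ} (st : AlgState n) : Finset (Fin n) :=
  Finset.univ.filter (fun i => (st.held i).isSome)

/-- The remaining objects. -/
def remObjs {n : ℕ} [NeZero n] (st : AlgState n) : Finset (Fin n) :=
  (remAgents st).image (heldObj st)

/-- The object of `S` adjacently larger than `o` w.r.t. the order `σ`. -/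
noncomputable def adjLarger {n : ℕ} (σ : Fin n ≃ Fin n) (S : Finset (Fin n)) (o : Fin n) : Fin n :=
  ((S.filter (fun o' => σ o < σ o')).toList.argmin (fun o' => σ o')).getD o

/-- The agent `i^s` leaving at the current step: the remaining agent holding the
`σ`-smallest object among those whose best remaining object is weakly below their
held object. -/
noncomputable def leaver {n : ℕ} [NeZero n] (σ : Fin n ≃ Fin n) (P : Fin n → Pref n)
    (st : AlgState n) : Option (Fin n) :=
  ((remAgents st).filter
      (fun i => σ (best (P i) (remObjs st)) ≤ σ (heldObj st i))).toList.argmin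
    (fun i => σ (heldObj st i))

/-- One step of the crawler: the leaving agent takes her best remaining object,
and every remaining agent holding an object weakly above the taken object and
strictly below the leaver's object crawls to the adjacently larger object. -/
noncomputable def crawlerStep {n : ℕ} [NeZero n] (σ : Fin n ≃ Fin n) (P : Fin n → Pref n)
    (st : AlgState n) : AlgState n :=
  match leaver σ P st with
  | none => st
  | some is =>
    let taken := best (P is) (remObjs st)
    { held := fun j =>
        if j = is then none
        else if (st.held j).isSome = true ∧ σ taken ≤ σ (heldObj st j) ∧
            σ (heldObj st j) < σ (heldObj st is) then
          some (adjLarger σ (remObjs st) (heldObj st j))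
        else st.held j,
      res := Function.update st.res is (some taken) }

/-- Initially every agent holds her endowment `o_i = i`. -/
def crawlerInit (n : ℕ) : AlgState n := ⟨fun i => some i, fun _ => none⟩

/-- The crawler rule w.r.t. the object order `σ`. -/
noncomputable def crawler {n : ℕ} [NeZero n] (σ : Fin n ≃ Fin n) (P : Fin n → Pref n) :
    Fin n → Fin n :=
  fun i => (((crawlerStep σ P)^[n] (crawlerInit n)).res i).getD 0

/-- `τ(i)`: the active agent whose endowment is `max^{P_i} O_{m̄⁰}`. -/
noncomputable def desTau {n : ℕ} [NeZero n] (P : Fin n → Pref n) (i : Fin n) : Fin n :=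
  best (P i) (activeAgents P)

/-- Stage I of the designator: null agents receive their endowments and leave. -/
def desInit {n : ℕ} [NeZero n] (P : Fin n → Pref n) : AlgState n :=
  { held := fun i => if topObj (P i) = i then none else some i,
    res := fun i => if topObj (P i) = i then some i else none }

/-- One step of Stage II of the designator: the leaving agent `i^s` takes her best
remaining object; if `τ(i^s)` is remaining and holds an object weakly above the
taken object and strictly below `i^s`'s held object, then `τ(i^s)` directly
inherits `i^s`'s object and only agents below `τ(i^s)` crawl (designating);
otherwise the crawling updating applies. -/
noncomputable def desStep {n : ℕ} [NeZero n] (σ : Fin n ≃ Fin n) (P : Fin n → Pref n)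
    (st : AlgState n) : AlgState n :=
  match leaver σ P st with
  | none => st
  | some is =>
    let taken := best (P is) (remObjs st)
    let t := desTau P is
    if (st.held t).isSome = true ∧ σ taken ≤ σ (heldObj st t) ∧
        σ (heldObj st t) < σ (heldObj st is) then
      { held := fun j =>
          if j = is then none
          else if j = t then some (heldObj st is)
          else if (st.held j).isSome = true ∧ σ taken ≤ σ (heldObj st j) ∧
              σ (heldObj st j) < σ (heldObj st t) then
            some (adjLarger σ (remObjs st) (heldObj st j))
          else st.held j,
        res := Function.update st.res is (some taken) }
    else
      { held := fun j =>
          if j = is then none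
          else if (st.held j).isSome = true ∧ σ taken ≤ σ (heldObj st j) ∧
              σ (heldObj st j) < σ (heldObj st is) then
            some (adjLarger σ (remObjs st) (heldObj st j))
          else st.held j,
        res := Function.update st.res is (some taken) }

/-- The designator rule w.r.t. the object order `σ`. -/
noncomputable def designator {n : ℕ} [NeZero n] (σ : Fin n ≃ Fin n) (P : Fin n → Pref n) :
    Fin n → Fin n :=
  fun i => (((desStep σ P)^[n] (desInit P)).res i).getD 0

/-- One round of top trading cycles: every remaining agent points to the owner of
her favorite remaining object (owner of object `o` is agent `o`), and every agent
lying on a pointing cycle receives the object she points to and leaves. -/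
noncomputable def ttcStep {n : ℕ} [NeZero n] (P : Fin n → Pref n) (res : Fin n → Option (Fin n)) :
    Fin n → Option (Fin n) :=
  let rem : Finset (Fin n) := Finset.univ.filter (fun i => res i = none)
  let pt : Fin n → Fin n := fun i => best (P i) rem
  fun i =>
    match res i with
    | some o => some o
    | none =>
      if (List.range (n + 1)).any (fun k => (k != 0) && (pt^[k] i == i)) then some (pt i)
      else none

/-- The top-trading-cycle rule. -/
noncomputable def ttc {n : ℕ} [NeZero n] (P : Fin n → Pref n) : Fin n → Fin n :=
  fun i => (((ttcStep P)^[n] (fun _ => none)) i).getD 0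

/-! ### Efficient, individually rational, strategy-proof rules and acclaimed agents -/

lemma best_spec {n : ℕ} [NeZero n] (p : Pref n) (S : Finset (Fin n)) (hS : S.Nonempty) :
    best p S ∈ S ∧ ∀ o ∈ S, p (best p S) ≤ p o := by
  unfold best
  cases h : S.toList.argmin (fun o => p o) with
  | none =>
    rw [List.argmin_eq_none] at h
    simp at h
    simp [h] at hS
  | some a =>
    have ha : a ∈ S.toList.argmin (fun o => p o) := by simp [h]
    refine ⟨by simpa using List.argmin_mem ha, fun o ho => ?_⟩
    exact List.le_of_mem_argmin (by simpa using ho) ha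

lemma apply_topObj {n : ℕ} [NeZero n] (p : Pref n) : p (topObj p) = 0 := by
  simp [topObj]

/-- The map on positions that reflects `{0, …, m}` and fixes every position above `m`. -/
def reflectBelow {n : ℕ} (m v : Fin n) : Fin n :=
  if v ≤ m then ⟨(m : ℕ) - v, by omega⟩ else v

lemma reflectBelow_involutive {n : ℕ} (m : Fin n) : Function.Involutive (reflectBelow m) := by
  intro v
  by_cases h : (v : ℕ) ≤ m
  · ext
    simp only [reflectBelow, Fin.le_def, h, if_true, Nat.sub_le]
    omega
  · simp only [reflectBelow, Fin.le_def, h, if_false]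

/-- The preference with peak `k` that goes down the order from `k` to its least element and then
up from the successor of `k`. -/
def downThenUp {n : ℕ} (σ : Fin n ≃ Fin n) (k : Fin n) : Pref n :=
  σ.trans (reflectBelow_involutive (σ k)).toPerm

lemma downThenUp_val {n : ℕ} (σ : Fin n ≃ Fin n) (k o : Fin n) :
    (downThenUp σ k o : ℕ) = if (σ o : ℕ) ≤ σ k then (σ k : ℕ) - σ o else σ o := by
  simp only [downThenUp, Equiv.trans_apply, Function.Involutive.coe_toPerm, reflectBelow,
    Fin.le_def]
  split_ifs <;> rfl

lemma topObj_downThenUp {n : ℕ} [NeZero n] (σ : Fin n ≃ Fin n) (k : Fin n) :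
    topObj (downThenUp σ k) = k := by
  unfold topObj
  rw [Equiv.symm_apply_eq]
  ext
  rw [downThenUp_val]
  simp

lemma downThenUp_mem {n : ℕ} [NeZero n] (σ : Fin n ≃ Fin n) (k : Fin n) :
    downThenUp σ k ∈ spDomain σ := by
  intro o o' h
  rw [topObj_downThenUp] at h
  simp only [prefers, Fin.lt_def, downThenUp_val] at h ⊢
  split_ifs <;> omega

/-- If a single-peaked preference ranks `i` above `k` and `i ≤ x < k` in the underlying order, then
it ranks `x` above `k`. -/
lemma singlePeaked_between {n : ℕ} [NeZero n] {σ : Fin n ≃ Fin n} {p : Pref n}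
    (hp : singlePeaked σ p) {i x k : Fin n} (hik : p i < p k) (hix : σ i ≤ σ x)
    (hxk : σ x < σ k) : p x < p k := by
  rcases eq_or_lt_of_le hix with h | h
  · rwa [← σ.injective h]
  rcases lt_trichotomy (σ x) (σ (topObj p)) with h1 | h1 | h1
  · exact lt_trans (hp x i (Or.inl ⟨h, h1⟩)) hik
  · rw [σ.injective h1, apply_topObj] at *
    exact lt_of_le_of_lt (Fin.zero_le _) hik
  · exact hp x k (Or.inr ⟨h1, hxk⟩)

/-- An allocation at which two agents strictly prefer each other's object is not efficient. -/
lemma not_efficient_of_swap {n : ℕ} {P : Fin n → Pref n} {m : Fin n → Fin n}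
    (hm : Function.Bijective m) {i y : Fin n} (hi : P i (m y) < P i (m i))
    (hy : P y (m i) < P y (m y)) : ¬ EffAt P m := by
  refine not_not_intro ⟨m ∘ Equiv.swap i y, hm.comp (Equiv.swap i y).bijective, ?_, i, ?_⟩
  · intro j
    simp only [weakPref, Function.comp]
    by_cases h1 : j = i
    · subst h1; simpa using hi.le
    by_cases h2 : j = y
    · subst h2; simpa using hy.le
    rw [Equiv.swap_apply_of_ne_of_ne h1 h2]
  · simpa [prefers] using hi

lemma null_keeps {n : ℕ} [NeZero n] {P : Fin n → Pref n} {m : Fin n → Fin n} (h : IRAt P m)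
    {j : Fin n} (hj : topObj (P j) = j) : m j = j := by
  have h1 : P j (m j) ≤ P j j := h j
  have h2 : P j j = 0 := by
    have := apply_topObj (P j)
    rwa [hj] at this
  rw [h2] at h1
  exact (P j).injective (by rw [h2]; exact le_antisymm h1 (Fin.zero_le _))

/-- The conclusion for an acclaimed agent whose favourite active object lies above her own
endowment in the order. -/
lemma acclaimed_gets_best_of_lt {n : ℕ} [NeZero n] (σ : Fin n ≃ Fin n)
    (f : (Fin n → Pref n) → (Fin n → Fin n))
    (hrule : IsRule (spDomain σ) f) (heff : Efficient (spDomain σ) f)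
    (hir : IndRational (spDomain σ) f) (hsp : StrategyProof (spDomain σ) f)
    (P : Fin n → Pref n) (hP : inD (spDomain σ) P) (i : Fin n) (hacc : acclaimed P i)
    (hlt : σ i < σ (best (P i) (activeAgents P))) :
    f P i = best (P i) (activeAgents P) := by
  obtain ⟨-, hiA, hne, hall⟩ := hacc
  have hbest : ∀ j, best (P j) (activeAgents P) ∈ activeAgents P ∧
      ∀ o ∈ activeAgents P, P j (best (P j) (activeAgents P)) ≤ P j o :=
    fun j => best_spec (P j) _ ⟨i, hiA⟩
  obtain ⟨hkA, hkbest⟩ := hbest i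
  set k := best (P i) (activeAgents P) with hk
  set P' := Function.update P i (downThenUp σ k) with hP'
  have hP'D : inD (spDomain σ) P' := by
    intro j
    by_cases h : j = i
    · subst h; simpa [hP'] using downThenUp_mem σ k
    · simpa [hP', h] using hP j
  have hP'i : P' i = downThenUp σ k := by simp [hP']
  have hkey : f P' i = k := by
    by_contra hx
    obtain ⟨y, hy⟩ := (hrule P' hP'D).2 k
    have hyi : y ≠ i := fun h => hx (h ▸ hy)
    have hP'y : P' y = P y := by simp [hP', hyi]
    have hyA : y ∈ activeAgents P := by
      by_contra hyA
      have hnull : topObj (P' y) = y := by simpa [activeAgents, hP'y] using hyA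
      rw [null_keeps (hir P' hP'D) hnull] at hy
      exact hyA (hy ▸ hkA)
    have hiry : downThenUp σ k (f P' i) ≤ downThenUp σ k i := by
      simpa [weakPref, hP'i] using hir P' hP'D i
    have hxne : (σ (f P' i) : ℕ) ≠ σ k := fun h => hx (σ.injective (Fin.ext h))
    -- individual rationality for the new preference: the object of `i` lies in `[i, k)`
    have hseg : σ i ≤ σ (f P' i) ∧ σ (f P' i) < σ k := by
      simp only [Fin.le_def, Fin.lt_def, downThenUp_val] at hiry hlt ⊢
      split_ifs at hiry <;> omega
    have hyik : P y i < P y k := by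
      have h1 := (hbest y).2 k hkA
      rw [hall y hyA hyi] at h1
      exact lt_of_le_of_ne h1 fun h => hne ((P y).injective h).symm
    have hyx : P y (f P' i) < P y k := singlePeaked_between (hP y) hyik hseg.1 hseg.2
    refine not_efficient_of_swap (hrule P' hP'D) (i := i) (y := y) ?_ ?_ (heff P' hP'D)
    · rw [hy, hP'i]
      have h2 := hseg.2
      simp only [Fin.lt_def, downThenUp_val] at h2 ⊢
      split_ifs <;> omega
    · rwa [hy, hP'y]
  have hsp1 : P i (f P i) ≤ P i k := by
    have h := hsp P hP i _ (downThenUp_mem σ k)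
    rwa [← hP', hkey] at h
  have hmem : f P i ∈ activeAgents P := by
    by_contra hz
    have hnull : topObj (P (f P i)) = f P i := by simpa [activeAgents] using hz
    have h := (hrule P hP).1 (null_keeps (hir P hP) hnull)
    exact hz (h.symm ▸ hiA)
  exact (P i).injective (le_antisymm hsp1 (hkbest _ hmem))

lemma spDomain_rev {n : ℕ} [NeZero n] (σ : Fin n ≃ Fin n) :
    spDomain (σ.trans Fin.revPerm) = spDomain σ := by
  ext p
  simp only [spDomain, Set.mem_ofPred_eq, singlePeaked, Equiv.trans_apply, Fin.revPerm_apply,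
    Fin.rev_lt_rev]
  exact forall₂_congr fun o o' => imp_congr_left (by tauto)

theorem sp_rules_satisfy_equityUA (n : ℕ) [NeZero n] (hn : 3 ≤ n) (σ : Fin n ≃ Fin n)
    (f : (Fin n → Pref n) → (Fin n → Fin n))
    (hrule : IsRule (spDomain σ) f) (heff : Efficient (spDomain σ) f)
    (hir : IndRational (spDomain σ) f) (hsp : StrategyProof (spDomain σ) f) :
    EquityUA (spDomain σ) f := by
  intro P hP i hacc
  rcases lt_trichotomy (σ i) (σ (best (P i) (activeAgents P))) with h | h | h
  · exact acclaimed_gets_best_of_lt σ f hrule heff hir hsp P hP i hacc h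
  · exact absurd (σ.injective h).symm hacc.2.2.1
  · rw [← spDomain_rev σ] at hrule heff hir hsp hP
    exact acclaimed_gets_best_of_lt _ f hrule heff hir hsp P hP i hacc (by simpa using h)
end

section
/- Let N = {i, j, k} be three agents with objects o_i < o_j < o_k, and let D be the domain consisting of the five preferences P^1 = (o_i, o_k, o_j), P^2 = (o_i, o_j, o_k), P^3 = (o_j, o_i, o_k), P^4 = (o_k, o_j, o_i), P^5 = (o_j, o_k, o_i) (listed from best to worst). Then D is a rich domain that is not a single-peaked domain, and the crawler C : D^3 → M defined according to < is efficient, individually rational, and obviously strategy-proof, yet violates equity under unanimous acclaim: at the profile (P_i, P_j, P_k) = (P^4, P^2, P^1), agent i is the acclaimed agent but C_i(P^4, P^2, P^1) = o_j ≠ o_k = r_1(P^4). -/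
/-- `P¹ = (o_i, o_k, o_j)` as a rank function on `Fin 3` (agents/objects `i,j,k = 0,1,2`). -/
def Pr1 : Pref 3 := Equiv.swap 1 2
/-- `P² = (o_i, o_j, o_k)`. -/
def Pr2 : Pref 3 := Equiv.refl (Fin 3)
/-- `P³ = (o_j, o_i, o_k)`. -/
def Pr3 : Pref 3 := Equiv.swap 0 1
/-- `P⁴ = (o_k, o_j, o_i)`. -/
def Pr4 : Pref 3 := Equiv.swap 0 2
/-- `P⁵ = (o_j, o_k, o_i)`. -/
def Pr5 : Pref 3 := (Equiv.swap (0 : Fin 3) 2).trans (Equiv.swap 0 1)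

/-- The five-preference domain of Example 2. -/
def D3 : Set (Pref 3) := {Pr1, Pr2, Pr3, Pr4, Pr5}

/-! ### Computable forms of the selections in the crawler -/

/-- `List.argmin` depends only on the members of the list when the key is injective on them. -/
lemma argmin_congr_of_mem_iff {α : Type*} [DecidableEq α] {β : Type*} [LinearOrder β]
    {l l' : List α} {f : α → β} (hmem : ∀ x, x ∈ l ↔ x ∈ l')
    (hf : ∀ x ∈ l, ∀ y ∈ l, f x = f y → x = y) : l.argmin f = l'.argmin f := by
  cases h : l.argmin f with
  | none =>
    rw [List.argmin_eq_none] at h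
    subst h
    have : l' = [] := List.eq_nil_iff_forall_not_mem.2 fun x hx => by simpa using (hmem x).2 hx
    simp [this]
  | some m =>
    symm
    rw [List.argmin_eq_some_iff] at h ⊢
    refine ⟨(hmem m).1 h.1, fun a ha => h.2.1 a ((hmem a).2 ha), fun a ha hle => ?_⟩
    have ha' := (hmem a).2 ha
    rw [hf a ha' m h.1 (le_antisymm hle (h.2.1 a ha'))]

/-- The `f`-smallest element of `S`, searched for along `List.finRange` instead of the
noncomputable enumeration `Finset.toList`. -/
def argminFin {n : ℕ} (f : Fin n → Fin n) (S : Finset (Fin n)) : Option (Fin n) :=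
  ((List.finRange n).filter (fun x => x ∈ S)).argmin f

lemma argmin_toList {n : ℕ} {f : Fin n → Fin n} {S : Finset (Fin n)}
    (hf : ∀ x ∈ S, ∀ y ∈ S, f x = f y → x = y) : S.toList.argmin f = argminFin f S :=
  argmin_congr_of_mem_iff (by simp) (by simpa using hf)

/-- Computable form of `best`. -/
def bestFin {n : ℕ} [NeZero n] (p : Pref n) (S : Finset (Fin n)) : Fin n :=
  (argminFin p S).getD 0

lemma best_eq {n : ℕ} [NeZero n] (p : Pref n) (S : Finset (Fin n)) : best p S = bestFin p S := by
  unfold best bestFin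
  rw [← argmin_toList (f := p) (fun x _ y _ h => p.injective h)]

/-- Computable form of `adjLarger` for the natural order on objects. -/
def adjFin {n : ℕ} (S : Finset (Fin n)) (o : Fin n) : Fin n :=
  (argminFin id (S.filter (fun o' => o < o'))).getD o

lemma adjLarger_eq {n : ℕ} (S : Finset (Fin n)) (o : Fin n) :
    adjLarger (Equiv.refl _) S o = adjFin S o := by
  unfold adjLarger adjFin
  rw [← argmin_toList (f := id) (fun x _ y _ h => h)]
  rfl

/-- Computable form of `leaver` for the natural order on objects. -/
def leaverFin {n : ℕ} [NeZero n] (P : Fin n → Pref n) (st : AlgState n) : Option (Fin n) :=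
  argminFin (heldObj st)
    ((remAgents st).filter (fun i => bestFin (P i) (remObjs st) ≤ heldObj st i))

/-- Computable form of `crawlerStep` for the natural order on objects. -/
def stepFin {n : ℕ} [NeZero n] (P : Fin n → Pref n) (st : AlgState n) : AlgState n :=
  match leaverFin P st with
  | none => st
  | some is =>
    let taken := bestFin (P is) (remObjs st)
    { held := fun j =>
        if j = is then none
        else if (st.held j).isSome = true ∧ taken ≤ heldObj st j ∧ heldObj st j < heldObj st is then
          some (adjFin (remObjs st) (heldObj st j))
        else st.held j,
      res := Function.update st.res is (some taken) }

/-- Distinct remaining agents hold distinct objects. -/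
def HeldInj {n : ℕ} [NeZero n] (st : AlgState n) : Prop :=
  ∀ x ∈ remAgents st, ∀ y ∈ remAgents st, heldObj st x = heldObj st y → x = y

instance {n : ℕ} [NeZero n] (st : AlgState n) : Decidable (HeldInj st) := by
  unfold HeldInj; infer_instance

/-- Without injectivity of the holdings the tie-breaking in `leaver` would depend on the
unspecified order of `Finset.toList`. -/
lemma crawlerStep_eq {n : ℕ} [NeZero n] (P : Fin n → Pref n) {st : AlgState n} (h : HeldInj st) :
    crawlerStep (Equiv.refl _) P st = stepFin P st := by
  have hl : leaver (Equiv.refl _) P st = leaverFin P st := by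
    unfold leaver leaverFin
    simp only [best_eq, Equiv.refl_apply]
    exact argmin_toList fun x hx y hy =>
      h x (Finset.mem_filter.1 hx).1 y (Finset.mem_filter.1 hy).1
  unfold crawlerStep stepFin
  rw [hl]
  simp only [best_eq, adjLarger_eq, Equiv.refl_apply]

/-! ### The crawler on the five-preference domain -/

/-- The five preferences of the domain, `pref5 a` being `P^(a+1)`. -/
def pref5 : Fin 5 → Pref 3 := ![Pr1, Pr2, Pr3, Pr4, Pr5]

lemma mem_D3_iff {p : Pref 3} : p ∈ D3 ↔ ∃ a, p = pref5 a := by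
  simp [D3, pref5, Fin.exists_fin_succ]

/-- The profile with preferences indexed by `a`, `b`, `c`. -/
def profile5 (a b c : Fin 5) : Fin 3 → Pref 3 := ![pref5 a, pref5 b, pref5 c]

lemma exists_profile5 {P : Fin 3 → Pref 3} (hP : inD D3 P) : ∃ a b c, P = profile5 a b c := by
  obtain ⟨a, ha⟩ := mem_D3_iff.1 (hP 0)
  obtain ⟨b, hb⟩ := mem_D3_iff.1 (hP 1)
  obtain ⟨c, hc⟩ := mem_D3_iff.1 (hP 2)
  refine ⟨a, b, c, ?_⟩
  funext l
  fin_cases l <;> simp [profile5, ha, hb, hc]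

/-- The three states from which the crawler takes a step satisfy the hypothesis of
`crawlerStep_eq`. -/
lemma heldInj_iterates : ∀ a b c : Fin 5, HeldInj (crawlerInit 3) ∧
    HeldInj (stepFin (profile5 a b c) (crawlerInit 3)) ∧
    HeldInj (stepFin (profile5 a b c) (stepFin (profile5 a b c) (crawlerInit 3))) := by
  decide +kernel

/-- Computable form of the crawler on a three-agent profile. -/
def crawler3 (P : Fin 3 → Pref 3) : Fin 3 → Fin 3 :=
  fun i => ((stepFin P (stepFin P (stepFin P (crawlerInit 3)))).res i).getD 0

lemma crawler_eq (a b c : Fin 5) :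
    crawler (Equiv.refl (Fin 3)) (profile5 a b c) = crawler3 (profile5 a b c) := by
  obtain ⟨h0, h1, h2⟩ := heldInj_iterates a b c
  funext i
  simp only [crawler, crawler3, Function.iterate_succ, Function.iterate_zero, Function.comp, id]
  rw [crawlerStep_eq _ h0, crawlerStep_eq _ h1, crawlerStep_eq _ h2]

instance {n : ℕ} (p : Pref n) (o o' : Fin n) : Decidable (prefers p o o') :=
  inferInstanceAs (Decidable (p o < p o'))

instance {n : ℕ} (p : Pref n) (o o' : Fin n) : Decidable (weakPref p o o') :=
  inferInstanceAs (Decidable (p o ≤ p o'))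

/-! ### A game form implementing the crawler -/

/-- Terminal histories of the game. Action `o < 3` claims object `o` for good, action `3` passes. -/
def terminals : List (List ℕ) :=
  [[0, 1], [0, 3, 1], [0, 3, 2],
   [3, 0, 1], [3, 0, 3, 1], [3, 0, 3, 2],
   [3, 1, 0], [3, 1, 3, 0], [3, 1, 3, 2],
   [3, 3, 0], [3, 3, 1], [3, 3, 2]]

/-- All histories: the prefixes of the terminal ones. -/
def histories : Finset (List ℕ) := (terminals.flatMap List.inits).toFinset

/-- Who moves at each history; the value at terminal histories and outside the tree is irrelevant. -/
def mover : List ℕ → Fin 3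
  | [] => 0
  | [0] => 1
  | [3] => 1
  | [3, 0] => 0
  | [3, 1] => 0
  | _ => 2

/-- Final allocation, listed by agent; `![0, 1, 2]` is the endowment. -/
def final : List ℕ → (Fin 3 → Fin 3)
  | [0, 3, 1] => ![0, 2, 1]
  | [3, 0, 1] => ![1, 0, 2]
  | [3, 0, 3, 1] => ![2, 0, 1]
  | [3, 0, 3, 2] => ![1, 0, 2]
  | [3, 1, 3, 0] => ![2, 1, 0]
  | [3, 3, 0] => ![1, 2, 0]
  | [3, 3, 1] => ![0, 2, 1]
  | _ => ![0, 1, 2]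

/-- The game in which agents are asked, in the crawler's order, whether they
claim an object or pass. -/
def crawlGame : GameForm 3 where
  hist := histories
  root_mem := by decide
  prefix_closed h a hm := by
    have : ∀ g ∈ histories, g.dropLast ∈ histories := by decide +kernel
    simpa using this _ hm
  player := mover
  outcome := final

lemma terminal_iff (h : List ℕ) : crawlGame.Terminal h ↔ h ∈ terminals := by
  constructor
  · rintro ⟨hm, hno⟩
    have key : ∀ g ∈ histories, g ∈ terminals ∨ ∃ a ∈ List.range 4, g ++ [a] ∈ histories := by
      decide +kernel
    rcases key h hm with ht | ⟨a, -, ha⟩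
    · exact ht
    · exact absurd ha (hno a)
  · intro ht
    refine ⟨(by decide +kernel : ∀ g ∈ terminals, g ∈ histories) h ht, fun a ha => ?_⟩
    have key : ∀ g ∈ histories, g ≠ [] → g.dropLast ∉ terminals := by decide +kernel
    exact key _ ha (by simp) (by simpa using ht)

/-- Sincere play at `h`: claim the best unclaimed object if that claim is available, and pass
otherwise. -/
def sincere (p : Pref 3) : Strategy := fun h =>
  let o : ℕ := bestFin p (Finset.univ.filter fun x : Fin 3 => (x : ℕ) ∉ h)
  if h ++ [o] ∈ histories then o else 3

lemma sincere_valid (i : Fin 3) {p : Pref 3} (hp : p ∈ D3) :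
    crawlGame.ValidStrat i (sincere p) := by
  obtain ⟨a, rfl⟩ := mem_D3_iff.1 hp
  intro h hm hnt _
  rw [terminal_iff] at hnt
  have key : ∀ a : Fin 5, ∀ g ∈ histories, g ∉ terminals →
      g ++ [sincere (pref5 a) g] ∈ histories := by decide +kernel
  exact key a h hm hnt

/-- The history `t` extends `h`, and every move of agent `i` on the way from `h` to `t` is the one
prescribed by `s`. -/
def Follows (i : Fin 3) (s : Strategy) (h t : List ℕ) : Prop :=
  h <+: t ∧ ∀ k < t.length, h.length ≤ k → mover (t.take k) = i → t[k]? = some (s (t.take k))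

instance (i : Fin 3) (s : Strategy) (h t : List ℕ) : Decidable (Follows i s h t) := by
  unfold Follows; infer_instance

lemma follows_of_reaches (i : Fin 3) {s : Fin 3 → Strategy} {h t : List ℕ}
    (hr : crawlGame.Reaches s h t) : Follows i (s i) h t := by
  induction hr with
  | refl => exact ⟨List.prefix_rfl, fun k hk hk' => absurd hk (by omega)⟩
  | @step t' _ _ _ ih =>
    refine ⟨ih.1.trans (List.prefix_append _ _), fun k hk hk' hm => ?_⟩
    rcases Nat.lt_or_ge k t'.length with hlt | hge
    · rw [List.take_append_of_le_length hlt.le] at hm ⊢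
      rw [List.getElem?_append_left hlt]
      exact ih.2 k hlt hk' hm
    · have hk2 : k = t'.length := by
        simp only [List.length_append, List.length_singleton] at hk
        omega
      subst hk2
      simp only [List.take_left'] at hm ⊢
      have : crawlGame.player t' = i := hm
      simp [this]

/-- The finite content of obvious dominance: if sincere play leads agent `i` to her decision node
`h`, then every outcome of continued sincere play is at least as good as every outcome of the
subtrees below the other actions at `h`. -/
lemma sincere_obvious : ∀ (i : Fin 3) (a : Fin 5), ∀ h ∈ histories, h ∉ terminals → mover h = i →
    Follows i (sincere (pref5 a)) [] h → ∀ t ∈ terminals, Follows i (sincere (pref5 a)) h t →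
    ∀ t' ∈ terminals, h <+: t' → t'[h.length]? ≠ some (sincere (pref5 a) h) →
    weakPref (pref5 a) (final t i) (final t' i) := by
  decide +kernel

lemma sincere_obvDom (i : Fin 3) {p : Pref 3} (hp : p ∈ D3) (s' : Strategy) :
    crawlGame.ObvDom i p (sincere p) s' := by
  obtain ⟨a, rfl⟩ := mem_D3_iff.1 hp
  rintro h ⟨hm, hnt, hpl, s, -, hsi, hreach⟩ - hne o o'
    ⟨s₁, -, hs₁, t, hr, ht, rfl⟩ ⟨s₂, -, hs₂, t', hr', ht', rfl⟩
  rw [terminal_iff] at hnt ht ht'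
  have hf' := follows_of_reaches i hr'
  refine sincere_obvious i a h hm hnt hpl (hsi ▸ follows_of_reaches i hreach) t ht
    (hs₁ ▸ follows_of_reaches i hr) t' ht' hf'.1 ?_
  obtain ⟨u, rfl⟩ := hf'.1
  have hpl2 : mover h = i := hpl
  -- The terminal history is a proper extension of `h` because `h` is not terminal.
  have hu : u ≠ [] := by
    rintro rfl
    exact hnt (by simpa using ht')
  have hmove := hf'.2 h.length (by simpa using List.length_pos_iff.2 hu) le_rfl
    (by rw [List.take_left]; exact hpl2)
  rw [hmove, hs₂]
  simpa using hne.symm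

/-- One move of play under the profile `s`, doing nothing at terminal histories. -/
def advance (s : Fin 3 → Strategy) (h : List ℕ) : List ℕ :=
  if h ∈ histories ∧ h ∉ terminals then h ++ [s (mover h) h] else h

lemma reaches_advance (s : Fin 3 → Strategy) (k : ℕ) :
    crawlGame.Reaches s [] ((advance s)^[k] []) := by
  induction k with
  | zero => exact .refl _
  | succ k ih =>
    rw [Function.iterate_succ_apply']
    generalize (advance s)^[k] [] = h at ih ⊢
    unfold advance
    split_ifs with hc
    · exact .step ih hc.1 (by rw [terminal_iff]; exact hc.2)
    · exact ih

/-- Sincere play ends within four moves, in the crawler's allocation. -/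
lemma sincere_play : ∀ a b c : Fin 5,
    (advance fun j => sincere (profile5 a b c j))^[4] [] ∈ terminals ∧
    final ((advance fun j => sincere (profile5 a b c j))^[4] []) = crawler3 (profile5 a b c) := by
  decide +kernel

lemma crawler_osp : OSP D3 (crawler (Equiv.refl (Fin 3))) := by
  refine ⟨crawlGame, fun _ => sincere, fun i p hp => sincere_valid i hp,
    fun i p hp s' _ => sincere_obvDom i hp s', fun P hP => ?_⟩
  obtain ⟨a, b, c, rfl⟩ := exists_profile5 hP
  obtain ⟨ht, ho⟩ := sincere_play a b c
  exact ⟨_, reaches_advance _ 4, (terminal_iff _).2 ht, ho.trans (crawler_eq a b c).symm⟩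

/-! ### The domain -/

lemma connected_zero_one : connectedObj D3 0 1 :=
  ⟨Pr2, by simp [D3], Pr3, by simp [D3], by decide, by decide, by decide, by decide⟩

lemma connected_one_two : connectedObj D3 1 2 :=
  ⟨Pr5, by simp [D3], Pr4, by simp [D3], by decide, by decide, by decide, by decide⟩

lemma connected_symm {o o' : Fin 3} (h : connectedObj D3 o o') : connectedObj D3 o' o := by
  obtain ⟨p, hp, p', hp', h1, h2, h3, h4⟩ := h
  exact ⟨p', hp', p, hp, h3, h4, h1, h2⟩

lemma richDomain_D3 : richDomain D3 := by
  refine ⟨fun o o' hne => ?_, Pr2, by simp [D3], Pr4, by simp [D3], by unfold reversedPair; decide⟩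
  have h01 := connected_zero_one
  have h12 := connected_one_two
  have h10 := connected_symm h01
  have h21 := connected_symm h12
  fin_cases o <;> fin_cases o'
  · exact absurd rfl hne
  · exact ⟨[0, 1], by decide, rfl, rfl, List.isChain_pair.2 h01⟩
  · exact ⟨[0, 1, 2], by decide, rfl, rfl, List.isChain_cons_cons.2 ⟨h01, List.isChain_pair.2 h12⟩⟩
  · exact ⟨[1, 0], by decide, rfl, rfl, List.isChain_pair.2 h10⟩
  · exact absurd rfl hne
  · exact ⟨[1, 2], by decide, rfl, rfl, List.isChain_pair.2 h12⟩
  · exact ⟨[2, 1, 0], by decide, rfl, rfl, List.isChain_cons_cons.2 ⟨h21, List.isChain_pair.2 h10⟩⟩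
  · exact ⟨[2, 1], by decide, rfl, rfl, List.isChain_pair.2 h21⟩
  · exact absurd rfl hne

/-- Each of the three objects is ranked last by one of `Pr1`, `Pr2`, `Pr4`, whereas the middle
object of an order is never last in a preference single-peaked with respect to it. -/
lemma not_isSPDomain_D3 : ¬ IsSPDomain D3 := by
  rintro ⟨σ, hσ⟩
  have key : ∀ σ : Fin 3 ≃ Fin 3,
      ¬ (singlePeaked σ Pr1 ∧ singlePeaked σ Pr2 ∧ singlePeaked σ Pr4) := by
    unfold singlePeaked
    decide +kernel
  exact key σ ⟨hσ (by simp [D3]), hσ (by simp [D3]), hσ (by simp [D3])⟩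

/-! ### Efficiency, individual rationality and the failure of equity -/

lemma crawler_efficient : Efficient D3 (crawler (Equiv.refl (Fin 3))) := by
  intro P hP
  obtain ⟨a, b, c, rfl⟩ := exists_profile5 hP
  rw [crawler_eq]
  have key : ∀ a b c : Fin 5, EffAt (profile5 a b c) (crawler3 (profile5 a b c)) := by
    unfold EffAt ParetoDom Function.Bijective
    decide +kernel
  exact key a b c

lemma crawler_indRational : IndRational D3 (crawler (Equiv.refl (Fin 3))) := by
  intro P hP
  obtain ⟨a, b, c, rfl⟩ := exists_profile5 hP
  rw [crawler_eq]
  have key : ∀ a b c : Fin 5, IRAt (profile5 a b c) (crawler3 (profile5 a b c)) := by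
    unfold IRAt
    decide +kernel
  exact key a b c

lemma acclaimed_zero : acclaimed ![Pr4, Pr2, Pr1] 0 := by
  unfold acclaimed
  simp only [best_eq]
  decide +kernel

lemma crawler_acclaimed_zero : crawler (Equiv.refl (Fin 3)) ![Pr4, Pr2, Pr1] 0 = 1 := by
  change crawler (Equiv.refl (Fin 3)) (profile5 3 1 0) 0 = 1
  rw [crawler_eq]
  decide +kernel

lemma not_equityUA : ¬ EquityUA D3 (crawler (Equiv.refl (Fin 3))) := by
  intro h
  have hD : inD D3 ![Pr4, Pr2, Pr1] := by
    intro l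
    fin_cases l <;> simp [D3]
  have h1 := h _ hD 0 acclaimed_zero
  rw [crawler_acclaimed_zero, best_eq] at h1
  revert h1
  decide +kernel

theorem crawler_on_rich_nonSP_domain :
    richDomain D3 ∧ ¬ IsSPDomain D3 ∧
    Efficient D3 (crawler (Equiv.refl (Fin 3))) ∧
    IndRational D3 (crawler (Equiv.refl (Fin 3))) ∧
    OSP D3 (crawler (Equiv.refl (Fin 3))) ∧
    acclaimed ![Pr4, Pr2, Pr1] 0 ∧
    crawler (Equiv.refl (Fin 3)) ![Pr4, Pr2, Pr1] 0 = 1 ∧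
    topObj Pr4 = 2 ∧ (1 : Fin 3) ≠ 2 ∧
    ¬ EquityUA D3 (crawler (Equiv.refl (Fin 3))) := by
  exact ⟨richDomain_D3, not_isSPDomain_D3, crawler_efficient, crawler_indRational, crawler_osp,
    acclaimed_zero, crawler_acclaimed_zero, by decide, by decide, not_equityUA⟩
end
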